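/- Let 𝕄 = ⟨M, 𝒞⟩ be a countable transitive model of GB⁻. If ℙ is a notion of class forcing for 𝕄 that is approachable by projections, then ℙ has bounded names. -/

import Mathlib

noncomputable section

namespace CF

open scoped ZFSet

attribute [local instance] Classical.propDecidable

/-! ### First-order formulas of the language of set theory -/

/-- First-order `∈`-formulas with variables indexed by `ℕ`. -/
inductive EFormula : Type
  | mem : ℕ → ℕ → EFormula
  | eq : ℕ → ℕ → EFormula
  | not : EFormula → EFormula
  | or : EFormula → EFormula → EFormula
  | ex : ℕ → EFormula → EFormula

/-- Satisfaction of an `∈`-formula in the structure `⟨D, ∈⟩` under assignment `v`. -/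
def EFormula.Sat (D : Set ZFSet) (v : ℕ → ZFSet) : EFormula → Prop
  | .mem i j => v i ∈ v j
  | .eq i j => v i = v j
  | .not φ => ¬ EFormula.Sat D v φ
  | .or φ ψ => EFormula.Sat D v φ ∨ EFormula.Sat D v ψ
  | .ex i φ => ∃ x ∈ D, EFormula.Sat D (Function.update v i x) φ

/-- All variables occurring in the formula are `< m`. -/
def EFormula.VarsLt (m : ℕ) : EFormula → Prop
  | .mem i j => i < m ∧ j < m
  | .eq i j => i < m ∧ j < m
  | .not φ => EFormula.VarsLt m φ
  | .or φ ψ => EFormula.VarsLt m φ ∧ EFormula.VarsLt m ψ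
  | .ex i φ => i < m ∧ EFormula.VarsLt m φ

/-- First-order formulas of the two-sorted language of `GB⁻`: set variables indexed by `ℕ`,
class parameters indexed by `ℕ`, and only set quantifiers. -/
inductive GBFormula : Type
  | mem : ℕ → ℕ → GBFormula
  | eq : ℕ → ℕ → GBFormula
  | cls : ℕ → ℕ → GBFormula    -- `vᵢ ∈ C_j`
  | not : GBFormula → GBFormula
  | or : GBFormula → GBFormula → GBFormula
  | ex : ℕ → GBFormula → GBFormula

/-- Satisfaction of a `GBFormula` with set quantifiers ranging over `Mset`,
class parameters `Cs` and set assignment `v`. -/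
def GBFormula.Sat (Mset : Set ZFSet) (Cs : ℕ → Set ZFSet) (v : ℕ → ZFSet) : GBFormula → Prop
  | .mem i j => v i ∈ v j
  | .eq i j => v i = v j
  | .cls i j => v i ∈ Cs j
  | .not φ => ¬ GBFormula.Sat Mset Cs v φ
  | .or φ ψ => GBFormula.Sat Mset Cs v φ ∨ GBFormula.Sat Mset Cs v ψ
  | .ex i φ => ∃ x ∈ Mset, GBFormula.Sat Mset Cs (Function.update v i x) φ

/-! ### Countable transitive models of GB⁻ -/

/-- A countable transitive second-order model `𝕄 = ⟨M, 𝒞⟩` of `GB⁻`: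
`M` is transitive and countable, classes are subsets of `M`, sets are classes, and the axioms
of `GB⁻` hold (extensionality and foundation are automatic for `ZFSet`; the set axioms of `ZF⁻`
with separation and collection allowing class parameters, together with first-order class
comprehension, are listed). -/
structure GBModel where
  M : Set ZFSet
  Cls : Set (Set ZFSet)
  countable_M : M.Countable
  countable_Cls : Cls.Countable
  transitive : ∀ x ∈ M, ∀ y : ZFSet, y ∈ x → y ∈ M
  sets_are_classes : ∀ x ∈ M, x.toSet ∈ Cls
  classes_sub : ∀ C ∈ Cls, C ⊆ M
  empty_mem : (∅ : ZFSet) ∈ M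
  pair_mem : ∀ x ∈ M, ∀ y ∈ M, ({x, y} : ZFSet) ∈ M
  sUnion_mem : ∀ x ∈ M, (⋃₀ x : ZFSet) ∈ M
  omega_mem : ZFSet.omega ∈ M
  comprehension : ∀ (φ : GBFormula) (v : ℕ → ZFSet) (Cs : ℕ → Set ZFSet),
    (∀ n, v n ∈ M) → (∀ n, Cs n ∈ Cls) →
    {x : ZFSet | x ∈ M ∧ GBFormula.Sat M Cs (Function.update v 0 x) φ} ∈ Cls
  separation : ∀ C ∈ Cls, ∀ a ∈ M, ∃ b ∈ M, ∀ x : ZFSet, x ∈ b ↔ x ∈ a ∧ x ∈ C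
  collection : ∀ C ∈ Cls, ∀ a ∈ M,
    (∀ x : ZFSet, x ∈ a → ∃ y ∈ M, x.pair y ∈ C) →
    ∃ b ∈ M, ∀ x : ZFSet, x ∈ a → ∃ y : ZFSet, y ∈ b ∧ x.pair y ∈ C

/-- A notion of class forcing `ℙ = ⟨P, ≤_ℙ⟩` for `𝕄`: a partial order (with maximal element
`𝟙_ℙ`) whose domain and order relation are classes of `𝕄`. -/
structure ClassForcing (𝕄 : GBModel) where
  P : Set ZFSet
  le : ZFSet → ZFSet → Prop
  one : ZFSet
  one_mem : one ∈ P
  le_one : ∀ p ∈ P, le p one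
  le_refl : ∀ p ∈ P, le p p
  le_trans : ∀ p q r : ZFSet, le p q → le q r → le p r
  P_cls : P ∈ 𝕄.Cls
  le_cls : {x : ZFSet | ∃ p ∈ P, ∃ q ∈ P, le p q ∧ x = p.pair q} ∈ 𝕄.Cls

/-! ### Names and their evaluation -/

/-- Auxiliary rank-bounded version of `IsName`. -/
def IsNameAux (S : Set ZFSet) (o : Ordinal) (σ : ZFSet) : Prop :=
  ∀ x ∈ σ.toSet, ∃ τ p : ZFSet, x = τ.pair p ∧ p ∈ S ∧
    ∃ _h : τ.rank < o, IsNameAux S τ.rank τ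
termination_by o

/-- `σ` is a `ℙ`-name (for the forcing with conditions `S`): every element of `σ` is a pair
`⟨τ, p⟩` with `τ` a `ℙ`-name and `p ∈ S`. -/
def IsName (S : Set ZFSet) (σ : ZFSet) : Prop := IsNameAux S σ.rank σ

/-- Image of a ZFSet under an arbitrary function (using choice for definability). -/
def zimage (f : ZFSet → ZFSet) (x : ZFSet) : ZFSet :=
  @ZFSet.image f (Classical.allZFSetDefinable _) x

/-- Auxiliary rank-bounded version of the evaluation `σ^G` of a name by a filter. -/
def nameEvalAux (G : Set ZFSet) (o : Ordinal) (σ : ZFSet) : ZFSet :=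
  zimage (fun τ => if h : τ.rank < o then nameEvalAux G τ.rank τ else ∅)
    (ZFSet.sep (fun τ => ∃ p, p ∈ G ∧ τ.pair p ∈ σ) (⋃₀ ⋃₀ σ))
termination_by o
decreasing_by exact h

/-- The evaluation `σ^G = {τ^G | ∃ p ∈ G, ⟨τ, p⟩ ∈ σ}` of a name `σ` by a filter `G`. -/
def nameEval (G : Set ZFSet) (σ : ZFSet) : ZFSet := nameEvalAux G σ.rank σ

/-- Auxiliary rank-bounded version of `nameTC`. -/
def nameTCAux (o : Ordinal) (σ : ZFSet) : Set ZFSet :=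
  {x | ∃ τ p : ZFSet, τ.pair p ∈ σ ∧ (x = p ∨ ∃ _h : τ.rank < o, x ∈ nameTCAux τ.rank τ)}
termination_by o

/-- The set `tc(σ) = ⋃ {{p} ∪ tc(τ) | ⟨τ,p⟩ ∈ σ}` of conditions appearing in the transitive
closure of the name `σ`. -/
def nameTC (σ : ZFSet) : Set ZFSet := nameTCAux σ.rank σ

/-! ### Filters, genericity, generic extensions -/

/-- `G` is a filter on the partial order with domain `S` and ordering `le`. -/
def IsFilterOn (S : Set ZFSet) (le : ZFSet → ZFSet → Prop) (G : Set ZFSet) : Prop :=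
  G ⊆ S ∧ G.Nonempty ∧ (∀ p ∈ G, ∀ q ∈ S, le p q → q ∈ G) ∧
    ∀ p ∈ G, ∀ q ∈ G, ∃ r ∈ G, le r p ∧ le r q

/-- `D` is a dense subclass of the partial order `⟨S, le⟩`. -/
def DenseIn (S : Set ZFSet) (le : ZFSet → ZFSet → Prop) (D : Set ZFSet) : Prop :=
  D ⊆ S ∧ ∀ p ∈ S, ∃ q ∈ D, le q p

/-- `G` is a generic filter on `⟨S, le⟩` over `𝕄`: a filter meeting every dense subclass
of `⟨S, le⟩` lying in `𝒞`. -/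
def IsGeneric (𝕄 : GBModel) (S : Set ZFSet) (le : ZFSet → ZFSet → Prop) (G : Set ZFSet) : Prop :=
  IsFilterOn S le G ∧ ∀ D ∈ 𝕄.Cls, DenseIn S le D → (G ∩ D).Nonempty

/-- The generic extension `M[G] = {σ^G | σ ∈ M a name for the forcing with domain S}`. -/
def MGen (𝕄 : GBModel) (S : Set ZFSet) (G : Set ZFSet) : Set ZFSet :=
  {x | ∃ σ : ZFSet, σ ∈ 𝕄.M ∧ IsName S σ ∧ nameEval G σ = x}

/-! ### Compatibility, the set decision property -/

/-- `p` and `q` are compatible in `⟨S, le⟩`. -/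
def Compat (S : Set ZFSet) (le : ZFSet → ZFSet → Prop) (p q : ZFSet) : Prop :=
  ∃ r ∈ S, le r p ∧ le r q

/-- `p ≤* q` : every extension of `p` is compatible with `q`. -/
def leStar (S : Set ZFSet) (le : ZFSet → ZFSet → Prop) (p q : ZFSet) : Prop :=
  ∀ r ∈ S, le r p → Compat S le r q

/-- `p` decides the set of conditions `A`: for every `a ∈ A`, either `p ≤* a` or `p ⊥ a`. -/
def Decides (S : Set ZFSet) (le : ZFSet → ZFSet → Prop) (p A : ZFSet) : Prop :=
  ∀ a : ZFSet, a ∈ A → leStar S le p a ∨ ¬ Compat S le p a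

/-- The set decision property: every set of conditions in `M` is decided densely. -/
def SetDecisionProperty (𝕄 : GBModel) (F : ClassForcing 𝕄) : Prop :=
  ∀ p ∈ F.P, ∀ A : ZFSet, A ∈ 𝕄.M → (∀ a : ZFSet, a ∈ A → a ∈ F.P) →
    ∃ q ∈ F.P, F.le q p ∧ Decides F.P F.le q A

/-! ### The forcing theorem -/

/-- Encode a finite list of sets as a single set by iterated Kuratowski pairing. -/
def listEncode : List ZFSet → ZFSet
  | [] => ∅
  | a :: l => a.pair (listEncode l)

/-- The assignment sending variable `n < m` to `σₙ^G` (and `∅` beyond `m`). -/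
def namesAssign (G : Set ZFSet) (m : ℕ) (σs : Fin m → ZFSet) : ℕ → ZFSet :=
  fun n => if h : n < m then nameEval G (σs ⟨n, h⟩) else ∅

/-- `p ⊩_ℙ φ(σ₀, …, σ_{m-1})` : for every generic `G ∋ p`, `M[G] ⊨ φ(σ₀^G, …, σ_{m-1}^G)`. -/
def Forces (𝕄 : GBModel) (F : ClassForcing 𝕄) (φ : EFormula) (m : ℕ) (p : ZFSet)
    (σs : Fin m → ZFSet) : Prop :=
  ∀ G : Set ZFSet, IsGeneric 𝕄 F.P F.le G → p ∈ G →
    EFormula.Sat (MGen 𝕄 F.P G) (namesAssign G m σs) φ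

/-- `ℙ` satisfies the forcing theorem over `𝕄`: for every `∈`-formula `φ(v₀,…,v_{m-1})`,
the forcing relation is a class of `𝕄` (definability lemma) and everything true in a generic
extension is forced by a condition in the generic filter (truth lemma). -/
def SatisfiesForcingTheorem (𝕄 : GBModel) (F : ClassForcing 𝕄) : Prop :=
  ∀ (φ : EFormula) (m : ℕ), EFormula.VarsLt m φ →
    ({x : ZFSet | ∃ p ∈ F.P, ∃ σs : Fin m → ZFSet,
        (∀ i, σs i ∈ 𝕄.M ∧ IsName F.P (σs i)) ∧
        Forces 𝕄 F φ m p σs ∧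
        x = p.pair (listEncode (List.ofFn σs))} ∈ 𝕄.Cls) ∧
    ∀ σs : Fin m → ZFSet, (∀ i, σs i ∈ 𝕄.M ∧ IsName F.P (σs i)) →
      ∀ G : Set ZFSet, IsGeneric 𝕄 F.P F.le G →
        EFormula.Sat (MGen 𝕄 F.P G) (namesAssign G m σs) φ →
        ∃ p ∈ G, Forces 𝕄 F φ m p σs

/-! ### Complete subforcings, the set reduction property -/

/-- `A` is an antichain of the partial order `⟨S, le⟩`. -/
def IsAntichainIn (S : Set ZFSet) (le : ZFSet → ZFSet → Prop) (A : Set ZFSet) : Prop :=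
  A ⊆ S ∧ ∀ p ∈ A, ∀ q ∈ A, p ≠ q → ¬ Compat S le p q

/-- `A` is a maximal antichain of the partial order `⟨S, le⟩`. -/
def IsMaxAntichainIn (S : Set ZFSet) (le : ZFSet → ZFSet → Prop) (A : Set ZFSet) : Prop :=
  IsAntichainIn S le A ∧ ∀ p ∈ S, ∃ a ∈ A, Compat S le p a

/-- `ℚ ⊲∘ ℙ` : `Q` is a set-sized complete subforcing of `ℙ` (with the induced ordering):
`Q ∈ M`, `Q ⊆ P`, `𝟙 ∈ Q`, and every maximal antichain of `ℚ` in `M` is predense in `ℙ`. -/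
def IsCompleteSub (𝕄 : GBModel) (F : ClassForcing 𝕄) (Q : ZFSet) : Prop :=
  Q ∈ 𝕄.M ∧ Q.toSet ⊆ F.P ∧ F.one ∈ Q ∧
    ∀ A : ZFSet, A ∈ 𝕄.M → A.toSet ⊆ Q.toSet → IsMaxAntichainIn Q.toSet F.le A.toSet →
      ∀ p ∈ F.P, ∃ a : ZFSet, a ∈ A ∧ Compat F.P F.le p a

/-- `ℚ^{∥q}` : the conditions of `Q` compatible with `q` in `ℙ`. -/
def QPar (𝕄 : GBModel) (F : ClassForcing 𝕄) (Q : ZFSet) (q : ZFSet) : Set ZFSet :=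
  {r | r ∈ Q ∧ Compat F.P F.le r q}

/-- The property `(*)(A, q, ℚ)`: for every `a ∈ A`, the set of `r ∈ ℚ^{∥q}` such that either
all `s ≤ q, r` satisfy `s ≤* a`, or all `s ≤ q, r` satisfy `s ⊥ a`, is dense in `ℚ^{∥q}`. -/
def StarProp (𝕄 : GBModel) (F : ClassForcing 𝕄) (A q Q : ZFSet) : Prop :=
  ∀ a : ZFSet, a ∈ A → ∀ r₀ ∈ QPar 𝕄 F Q q, ∃ r₁ ∈ QPar 𝕄 F Q q, F.le r₁ r₀ ∧
    ((∀ s ∈ F.P, F.le s q → F.le s r₁ → leStar F.P F.le s a) ∨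
      (∀ s ∈ F.P, F.le s q → F.le s r₁ → ¬ Compat F.P F.le s a))

/-- The set reduction property. -/
def SetReductionProperty (𝕄 : GBModel) (F : ClassForcing 𝕄) : Prop :=
  ∀ A : ZFSet, A ∈ 𝕄.M → (∀ a : ZFSet, a ∈ A → a ∈ F.P) →
    ∀ p ∈ F.P, ∃ q ∈ F.P, F.le q p ∧ ∃ Q : ZFSet, IsCompleteSub 𝕄 F Q ∧ StarProp 𝕄 F A q Q

/-- Every new set added by `ℙ` is added by a set-sized complete subforcing of `ℙ`. -/
def EveryNewSetBySub (𝕄 : GBModel) (F : ClassForcing 𝕄) : Prop :=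
  ∀ G : Set ZFSet, IsGeneric 𝕄 F.P F.le G →
    ∀ x : ZFSet, x ∈ MGen 𝕄 F.P G → x ∉ 𝕄.M →
      ∃ Q : ZFSet, IsCompleteSub 𝕄 F Q ∧ x ∈ MGen 𝕄 Q.toSet (G ∩ Q.toSet)

/-! ### The q-reduction of a name -/

/-- First component of a Kuratowski pair (junk value `∅` otherwise). -/
def fstZ (x : ZFSet) : ZFSet :=
  if h : ∃ a b : ZFSet, x = a.pair b then h.choose else ∅

/-- Second component of a Kuratowski pair (junk value `∅` otherwise). -/
def sndZ (x : ZFSet) : ZFSet :=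
  if h : ∃ a b : ZFSet, x = a.pair b then h.choose_spec.choose else ∅

/-- Cartesian product of two `ZFSet`s. -/
def zprod (a b : ZFSet) : ZFSet :=
  ZFSet.sep (fun x => ∃ u v : ZFSet, u ∈ a ∧ v ∈ b ∧ x = u.pair v)
    (ZFSet.powerset (ZFSet.powerset (a ∪ b)))

/-- Auxiliary rank-bounded version of the `q`-reduction of a name to `Q`. -/
def reduceAux (S : Set ZFSet) (le : ZFSet → ZFSet → Prop) (Q q : ZFSet) (o : Ordinal)
    (σ : ZFSet) : ZFSet :=
  zimage
    (fun x =>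
      (if h : (fstZ x).rank < o then reduceAux S le Q q (fstZ x).rank (fstZ x) else ∅).pair
        (sndZ x))
    (ZFSet.sep
      (fun x => ∃ τ r : ZFSet, x = τ.pair r ∧ r ∈ Q ∧
        ∃ a : ZFSet, τ.pair a ∈ σ ∧ ∀ s ∈ S, le s q → le s r → leStar S le s a)
      (zprod (⋃₀ ⋃₀ σ) Q))
termination_by o
decreasing_by exact h

/-- The `q`-reduction `σ_q^ℚ = {⟨τ_q^ℚ, r⟩ | r ∈ ℚ ∧ ∃a (⟨τ,a⟩ ∈ σ ∧ ∀ s ≤ q,r (s ≤* a))}`. -/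
def reduceName (S : Set ZFSet) (le : ZFSet → ZFSet → Prop) (Q q σ : ZFSet) : ZFSet :=
  reduceAux S le Q q σ.rank σ

/-! ### Projections -/

/-- `f` is a projection from `⟨S, le⟩` (with maximum `one`) onto the subforcing with domain
`Qs`, respecting `X`. -/
def IsProjectionResp (S : Set ZFSet) (le : ZFSet → ZFSet → Prop) (one : ZFSet)
    (Qs X : Set ZFSet) (f : ZFSet → ZFSet) : Prop :=
  (∀ p ∈ S, f p ∈ Qs) ∧
  f one = one ∧
  (∀ p ∈ S, ∀ q ∈ S, le p q → le (f p) (f q)) ∧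
  (∀ p ∈ S, ∀ q ∈ Qs, le q (f p) → ∃ r ∈ S, le r p ∧ le (f r) q) ∧
  (∀ p ∈ X, ∀ q ∈ S, le (f q) p → le q p) ∧
  (∀ p ∈ X, f p = p)

/-- `ℙ` is approachable by projections: there is a class `Π ∈ 𝒞` whose sections `π_{X,y}`
are such that for every set `X ⊆ ℙ` there are a set `y` and a set-sized subforcing `ℚ ⊇ X ∪ {𝟙}`
of `ℙ` with `π_{X,y} : ℙ → ℚ` a projection respecting `X`. -/
def ApproachableByProjections (𝕄 : GBModel) (F : ClassForcing 𝕄) : Prop :=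
  ∃ Pi ∈ 𝕄.Cls, ∀ X : ZFSet, X ∈ 𝕄.M → (∀ x : ZFSet, x ∈ X → x ∈ F.P) →
    ∃ y ∈ 𝕄.M, ∃ Q : ZFSet, Q ∈ 𝕄.M ∧ Q.toSet ⊆ F.P ∧ (∀ x : ZFSet, x ∈ X → x ∈ Q) ∧
      F.one ∈ Q ∧ ∃ f : ZFSet → ZFSet,
        (∀ u ∈ F.P, ∀ v : ZFSet, (f u = v ↔ X.pair (y.pair (u.pair v)) ∈ Pi)) ∧
        IsProjectionResp F.P F.le F.one Q.toSet X.toSet f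

/-- `p ⊩ σ ⊆ τ` for the forcing with domain `S` and ordering `le`. -/
def ForcesSubset (𝕄 : GBModel) (S : Set ZFSet) (le : ZFSet → ZFSet → Prop)
    (p σ τ : ZFSet) : Prop :=
  ∀ G : Set ZFSet, IsGeneric 𝕄 S le G → p ∈ G → nameEval G σ ⊆ nameEval G τ

/-! ### Bounded names, turning proper classes into sets -/

/-- The possible values of the name `σ` in generic extensions. -/
def PossibleValues (𝕄 : GBModel) (S : Set ZFSet) (le : ZFSet → ZFSet → Prop)
    (σ : ZFSet) : Set ZFSet :=
  {x | ∃ G : Set ZFSet, IsGeneric 𝕄 S le G ∧ nameEval G σ = x}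

/-- The name `σ` is bounded: some `A ∈ M` covers all its possible values lying in `M`. -/
def IsBoundedName (𝕄 : GBModel) (F : ClassForcing 𝕄) (σ : ZFSet) : Prop :=
  ∃ A ∈ 𝕄.M, PossibleValues 𝕄 F.P F.le σ ∩ 𝕄.M ⊆ A.toSet

/-- `ℙ` has bounded names: every `ℙ`-name in `M` is bounded. -/
def HasBoundedNames (𝕄 : GBModel) (F : ClassForcing 𝕄) : Prop :=
  ∀ σ : ZFSet, σ ∈ 𝕄.M → IsName F.P σ → IsBoundedName 𝕄 F σ

/-- `X` is a proper class of `𝕄`: a class of `𝕄` that is not (the extension of) a set of `𝕄`. -/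
def IsProperClass (𝕄 : GBModel) (X : Set ZFSet) : Prop :=
  X ∈ 𝕄.Cls ∧ ¬ ∃ x ∈ 𝕄.M, x.toSet = X

/-- The proper class `X` of `𝕄` is turned into a set by forcing with `ℙ`: some `ℙ`-name in `M`
evaluates to `X` under some generic filter. -/
def TurnsIntoSet (𝕄 : GBModel) (F : ClassForcing 𝕄) (X : Set ZFSet) : Prop :=
  ∃ σ : ZFSet, σ ∈ 𝕄.M ∧ IsName F.P σ ∧
    ∃ G : Set ZFSet, IsGeneric 𝕄 F.P F.le G ∧ (nameEval G σ).toSet = X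

/-! ### Functions and partial functions as sets, collapse forcings -/

/-- `p` is a partial function from (a subset of) `γ` into the class `Y`. -/
def IsPFunOn (p γ : ZFSet) (Y : Set ZFSet) : Prop :=
  (∀ x : ZFSet, x ∈ p → ∃ a b : ZFSet, x = a.pair b ∧ a ∈ γ ∧ b ∈ Y) ∧
  ∀ a b b' : ZFSet, a.pair b ∈ p → a.pair b' ∈ p → b = b'

/-- The domain of a set of pairs. -/
def pdom (p : ZFSet) : Set ZFSet := {a | ∃ b : ZFSet, a.pair b ∈ p}

/-- `f` is (the graph of) an injective function from `X` into `Y`. -/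
def ZInjFun (f : ZFSet) (X Y : Set ZFSet) : Prop :=
  (∀ x : ZFSet, x ∈ f → ∃ a b : ZFSet, x = a.pair b ∧ a ∈ X ∧ b ∈ Y) ∧
  (∀ a b b' : ZFSet, a.pair b ∈ f → a.pair b' ∈ f → b = b') ∧
  (∀ a ∈ X, ∃ b : ZFSet, a.pair b ∈ f) ∧
  (∀ a a' b : ZFSet, a.pair b ∈ f → a'.pair b ∈ f → a = a')

/-- `D` has size less than the cardinality of `γ` in the sense of `M`:
no function of `M` injects `γ` into `D`. -/
def SmallerThan (𝕄 : GBModel) (γ : ZFSet) (D : Set ZFSet) : Prop :=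
  ¬ ∃ f ∈ 𝕄.M, ZInjFun f γ.toSet D

/-- Conditions of `Col(γ, Y)^M`: partial functions of `M` from `γ` to `Y` whose domain has
size less than the cardinality of `γ` in `M`. -/
def ColCond (𝕄 : GBModel) (γ : ZFSet) (Y : Set ZFSet) (p : ZFSet) : Prop :=
  p ∈ 𝕄.M ∧ IsPFunOn p γ Y ∧ SmallerThan 𝕄 γ (pdom p)

/-- Conditions of `Col₋*(γ, Y)^M`: those conditions of `Col(γ, Y)^M` whose domain is
an ordinal. -/
def ColStarCond (𝕄 : GBModel) (γ : ZFSet) (Y : Set ZFSet) (p : ZFSet) : Prop :=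
  ColCond 𝕄 γ Y p ∧ ∃ β : ZFSet, β.IsOrdinal ∧ pdom p = β.toSet

/-- `f` is (the graph of) a function with domain `I`. -/
def ZFuncOn (f I : ZFSet) : Prop :=
  (∀ x : ZFSet, x ∈ f → ∃ a b : ZFSet, x = a.pair b ∧ a ∈ I) ∧
  (∀ a b b' : ZFSet, a.pair b ∈ f → a.pair b' ∈ f → b = b') ∧
  (∀ a : ZFSet, a ∈ I → ∃ b : ZFSet, a.pair b ∈ f)

/-- Application of a set-function to an argument (junk value `∅` if undefined). -/
def zapp (f i : ZFSet) : ZFSet :=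
  if h : ∃ b : ZFSet, i.pair b ∈ f then h.choose else ∅

/-! ### Pretameness -/

/-- `ℙ` is pretame for `𝕄`: for every `p ∈ ℙ`, `I ∈ M` and every `𝒞`-coded sequence
`⟨D_i | i ∈ I⟩` (coded as the class of pairs `⟨i, x⟩` with `x ∈ D_i`) of dense subclasses
of `ℙ`, there are `q ≤ p` and `⟨d_i | i ∈ I⟩ ∈ M` with `d_i ⊆ D_i` predense below `q`. -/
def Pretame (𝕄 : GBModel) (F : ClassForcing 𝕄) : Prop :=
  ∀ p ∈ F.P, ∀ I : ZFSet, I ∈ 𝕄.M → ∀ D ∈ 𝕄.Cls,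
    (∀ i : ZFSet, i ∈ I →
      (∀ x : ZFSet, i.pair x ∈ D → x ∈ F.P) ∧ ∀ r ∈ F.P, ∃ s : ZFSet, i.pair s ∈ D ∧ F.le s r) →
    ∃ q ∈ F.P, F.le q p ∧ ∃ d ∈ 𝕄.M, ZFuncOn d I ∧
      ∀ i : ZFSet, i ∈ I → (∀ x : ZFSet, x ∈ zapp d i → i.pair x ∈ D) ∧
        ∀ r ∈ F.P, F.le r q → ∃ a : ZFSet, a ∈ zapp d i ∧ Compat F.P F.le r a

/-! ### The specific forcings of Sections 6 and 7 -/

/-- Conditions of Definition 6.8: (not necessarily finite) partial functions from `ω` to `2`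
lying in `M`. -/
def PCond (𝕄 : GBModel) (p : ZFSet) : Prop :=
  p ∈ 𝕄.M ∧ IsPFunOn p ZFSet.omega {x : ZFSet | x = ∅ ∨ x = ({∅} : ZFSet)}

/-- Conditions of the finite support product `ℚ` of `ω` many copies of `ℙ`:
finite sequences `⟨p₀, …, p_k⟩` of `ℙ`-conditions. -/
def QCond (𝕄 : GBModel) (s : ZFSet) : Prop :=
  s ∈ 𝕄.M ∧ ∃ n : ZFSet, n ∈ ZFSet.omega ∧ ZFuncOn s n ∧
    ∀ i : ZFSet, i ∈ n → PCond 𝕄 (zapp s i)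

/-- The coordinatewise ordering on `ℚ`. -/
def QLe (s' s : ZFSet) : Prop :=
  pdom s ⊆ pdom s' ∧ ∀ i ∈ pdom s, zapp s i ⊆ zapp s' i

/-- The power class `𝒫(ω)^M`. -/
def PowOmega (𝕄 : GBModel) : Set ZFSet :=
  {x : ZFSet | x ∈ 𝕄.M ∧ x ⊆ ZFSet.omega}

/-- `X ⊆ M` is definable over `⟨M, ∈⟩` (from set parameters). -/
def DefinableOver (Mset : Set ZFSet) (X : Set ZFSet) : Prop :=
  ∃ (φ : EFormula) (v : ℕ → ZFSet), (∀ n, v n ∈ Mset) ∧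
    X = {x : ZFSet | x ∈ Mset ∧ EFormula.Sat Mset (Function.update v 0 x) φ}

/-- Every set of `M` is countable in `M`: it injects into `ω` by a function of `M`. -/
def AllSetsCountable (𝕄 : GBModel) : Prop :=
  ∀ x ∈ 𝕄.M, ∃ f ∈ 𝕄.M, ZInjFun f x.toSet ZFSet.omega.toSet


/-! ### Definability calculus -/

/-- A predicate on assignments which is first-order definable from classes of the model. -/
def RD (𝕄 : GBModel) (P : (ℕ → ZFSet) → Prop) : Prop :=
  ∃ (φ : GBFormula) (Cs : ℕ → Set ZFSet), (∀ n, Cs n ∈ 𝕄.Cls) ∧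
    ∀ v : ℕ → ZFSet, (∀ n, v n ∈ 𝕄.M) → (GBFormula.Sat 𝕄.M Cs v φ ↔ P v)

/-- Reindexing of the class parameters of a formula. -/
def clsRename (f : ℕ → ℕ) : GBFormula → GBFormula
  | .mem i j => .mem i j
  | .eq i j => .eq i j
  | .cls i j => .cls i (f j)
  | .not φ => .not (clsRename f φ)
  | .or φ ψ => .or (clsRename f φ) (clsRename f ψ)
  | .ex i φ => .ex i (clsRename f φ)

theorem sat_clsRename (M : Set ZFSet) (f : ℕ → ℕ) (Cs : ℕ → Set ZFSet) (φ : GBFormula) :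
    ∀ v : ℕ → ZFSet, GBFormula.Sat M Cs v (clsRename f φ) ↔
      GBFormula.Sat M (fun n => Cs (f n)) v φ := by
  induction φ with
  | mem i j => intro v; simp [clsRename, GBFormula.Sat]
  | eq i j => intro v; simp [clsRename, GBFormula.Sat]
  | cls i j => intro v; simp [clsRename, GBFormula.Sat]
  | not φ ih => intro v; simp [clsRename, GBFormula.Sat, ih]
  | or φ ψ ih1 ih2 => intro v; simp [clsRename, GBFormula.Sat, ih1, ih2]
  | ex i φ ih => intro v; simp [clsRename, GBFormula.Sat, ih]

theorem upd_mem {𝕄 : GBModel} {v : ℕ → ZFSet} (hv : ∀ n, v n ∈ 𝕄.M) (i : ℕ) {x : ZFSet}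
    (hx : x ∈ 𝕄.M) : ∀ n, Function.update v i x n ∈ 𝕄.M := by
  intro n
  by_cases h : n = i
  · subst h; simpa using hx
  · simpa [Function.update_of_ne h] using hv n

theorem empty_cls (𝕄 : GBModel) : (∅ : ZFSet).toSet ∈ 𝕄.Cls :=
  𝕄.sets_are_classes _ 𝕄.empty_mem

theorem RD.congr {𝕄 : GBModel} {P Q : (ℕ → ZFSet) → Prop} (h : RD 𝕄 P)
    (hPQ : ∀ v : ℕ → ZFSet, (∀ n, v n ∈ 𝕄.M) → (P v ↔ Q v)) : RD 𝕄 Q := by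
  obtain ⟨φ, Cs, hC, H⟩ := h
  exact ⟨φ, Cs, hC, fun v hv => (H v hv).trans (hPQ v hv)⟩

theorem RD.mem (𝕄 : GBModel) (i j : ℕ) : RD 𝕄 (fun v => v i ∈ v j) :=
  ⟨.mem i j, fun _ => (∅ : ZFSet).toSet, fun _ => empty_cls 𝕄, fun _ _ => Iff.rfl⟩

theorem RD.eq (𝕄 : GBModel) (i j : ℕ) : RD 𝕄 (fun v => v i = v j) :=
  ⟨.eq i j, fun _ => (∅ : ZFSet).toSet, fun _ => empty_cls 𝕄, fun _ _ => Iff.rfl⟩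

theorem RD.cls {𝕄 : GBModel} (i : ℕ) {C : Set ZFSet} (hC : C ∈ 𝕄.Cls) :
    RD 𝕄 (fun v => v i ∈ C) :=
  ⟨.cls i 0, fun _ => C, fun _ => hC, fun _ _ => Iff.rfl⟩

theorem RD.not {𝕄 : GBModel} {P : (ℕ → ZFSet) → Prop} (h : RD 𝕄 P) :
    RD 𝕄 (fun v => ¬ P v) := by
  obtain ⟨φ, Cs, hC, H⟩ := h
  exact ⟨.not φ, Cs, hC, fun v hv => not_congr (H v hv)⟩

theorem RD.or {𝕄 : GBModel} {P Q : (ℕ → ZFSet) → Prop} (h : RD 𝕄 P) (h' : RD 𝕄 Q) :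
    RD 𝕄 (fun v => P v ∨ Q v) := by
  obtain ⟨φ, Cs, hC, H⟩ := h
  obtain ⟨ψ, Ds, hD, K⟩ := h'
  refine ⟨.or (clsRename (fun n => 2 * n) φ) (clsRename (fun n => 2 * n + 1) ψ),
    fun n => if n % 2 = 0 then Cs (n / 2) else Ds (n / 2), ?_, ?_⟩
  · intro n
    dsimp only
    split_ifs
    · exact hC _
    · exact hD _
  · intro v hv
    simp only [GBFormula.Sat, sat_clsRename]
    refine or_congr ?_ ?_
    · rw [← H v hv]
      have : (fun n => if 2 * n % 2 = 0 then Cs (2 * n / 2) else Ds (2 * n / 2)) = Cs := by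
        funext n; simp
      rw [this]
    · rw [← K v hv]
      have : (fun n => if (2 * n + 1) % 2 = 0 then Cs ((2 * n + 1) / 2)
          else Ds ((2 * n + 1) / 2)) = Ds := by
        funext n
        rw [if_neg (by omega)]
        congr 1
        omega
      rw [this]

theorem RD.and {𝕄 : GBModel} {P Q : (ℕ → ZFSet) → Prop} (h : RD 𝕄 P) (h' : RD 𝕄 Q) :
    RD 𝕄 (fun v => P v ∧ Q v) :=
  (RD.not (RD.or (RD.not h) (RD.not h'))).congr (fun v _ => by tauto)

theorem RD.iff {𝕄 : GBModel} {P Q : (ℕ → ZFSet) → Prop} (h : RD 𝕄 P) (h' : RD 𝕄 Q) :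
    RD 𝕄 (fun v => P v ↔ Q v) :=
  (RD.or (RD.and h h') (RD.and (RD.not h) (RD.not h'))).congr (fun v _ => by tauto)

theorem RD.ex {𝕄 : GBModel} (i : ℕ) {P : (ℕ → ZFSet) → Prop} (h : RD 𝕄 P) :
    RD 𝕄 (fun v => ∃ x ∈ 𝕄.M, P (Function.update v i x)) := by
  obtain ⟨φ, Cs, hC, H⟩ := h
  refine ⟨.ex i φ, Cs, hC, fun v hv => ?_⟩
  simp only [GBFormula.Sat]
  refine exists_congr fun x => and_congr_right fun hx => H _ (upd_mem hv i hx)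

theorem RD.all {𝕄 : GBModel} (i : ℕ) {P : (ℕ → ZFSet) → Prop} (h : RD 𝕄 P) :
    RD 𝕄 (fun v => ∀ x ∈ 𝕄.M, P (Function.update v i x)) :=
  (RD.not (RD.ex i (RD.not h))).congr (fun v _ => by push Not; rfl)

theorem singleton_memM {𝕄 : GBModel} {x : ZFSet} (hx : x ∈ 𝕄.M) : ({x} : ZFSet) ∈ 𝕄.M := by
  have := 𝕄.pair_mem x hx x hx
  rwa [ZFSet.pair_eq_singleton] at this

theorem pair_memM {𝕄 : GBModel} {x y : ZFSet} (hx : x ∈ 𝕄.M) (hy : y ∈ 𝕄.M) :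
    x.pair y ∈ 𝕄.M :=
  𝕄.pair_mem _ (singleton_memM hx) _ (𝕄.pair_mem x hx y hy)

theorem union_memM {𝕄 : GBModel} {x y : ZFSet} (hx : x ∈ 𝕄.M) (hy : y ∈ 𝕄.M) :
    x ∪ y ∈ 𝕄.M := by
  rw [← ZFSet.sUnion_pair]
  exact 𝕄.sUnion_mem _ (𝕄.pair_mem x hx y hy)

theorem pair_left_memM {𝕄 : GBModel} {x y : ZFSet} (h : x.pair y ∈ 𝕄.M) : x ∈ 𝕄.M := by
  have h1 : ({x, y} : ZFSet) ∈ 𝕄.M := 𝕄.transitive _ h _ (by simp [ZFSet.pair])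
  exact 𝕄.transitive _ h1 _ (by simp)

theorem pair_right_memM {𝕄 : GBModel} {x y : ZFSet} (h : x.pair y ∈ 𝕄.M) : y ∈ 𝕄.M := by
  have h1 : ({x, y} : ZFSet) ∈ 𝕄.M := 𝕄.transitive _ h _ (by simp [ZFSet.pair])
  exact 𝕄.transitive _ h1 _ (by simp)

theorem ext_M {𝕄 : GBModel} {x y : ZFSet} (hx : x ∈ 𝕄.M) (hy : y ∈ 𝕄.M) :
    (∀ z ∈ 𝕄.M, (z ∈ x ↔ z ∈ y)) ↔ x = y := by
  constructor
  · intro h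
    ext z
    exact ⟨fun hz => (h z (𝕄.transitive _ hx _ hz)).1 hz,
      fun hz => (h z (𝕄.transitive _ hy _ hz)).2 hz⟩
  · rintro rfl z _
    rfl

theorem RD.upair (𝕄 : GBModel) {i a b : ℕ} (f : ℕ) (hi : i ≠ f) (ha : a ≠ f) (hb : b ≠ f) :
    RD 𝕄 (fun v => v i = ({v a, v b} : ZFSet)) := by
  refine (RD.all f (RD.iff (RD.mem 𝕄 f i) (RD.or (RD.eq 𝕄 f a) (RD.eq 𝕄 f b)))).congr ?_
  intro v hv
  rw [← ext_M (hv i) (𝕄.pair_mem _ (hv a) _ (hv b))]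
  simp [Function.update_of_ne hi, Function.update_of_ne ha, Function.update_of_ne hb]

theorem RD.opair (𝕄 : GBModel) (j : ℕ) :
    RD 𝕄 (fun v => v j = (v (j + 1)).pair (v (j + 2))) := by
  refine (RD.ex (j + 3) (RD.ex (j + 4) (RD.and
    (RD.upair 𝕄 (i := j + 3) (a := j + 1) (b := j + 1) (j + 5) (by simp) (by simp) (by simp))
    (RD.and
      (RD.upair 𝕄 (i := j + 4) (a := j + 1) (b := j + 2) (j + 5) (by simp) (by simp) (by simp))
      (RD.upair 𝕄 (i := j) (a := j + 3) (b := j + 4) (j + 5) (by simp) (by simp)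
        (by simp)))))).congr ?_
  intro v hv
  have h1 : j ≠ j + 3 := by omega
  have h2 : j ≠ j + 4 := by omega
  simp only [Function.update_apply]
  simp
  have h3 := singleton_memM (hv (j + 1))
  have h4 := 𝕄.pair_mem _ (hv (j + 1)) _ (hv (j + 2))
  simp [h3, h4, ZFSet.pair]

/-- Definable predicates in a context of `k` variables. -/
def Dfn (𝕄 : GBModel) (k : ℕ) (P : (Fin k → ZFSet) → Prop) : Prop :=
  RD 𝕄 (fun v => P (fun i => v i))

/-- Definable terms in a context of `k` variables. -/
def IsT (𝕄 : GBModel) (k : ℕ) (t : (Fin k → ZFSet) → ZFSet) : Prop :=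
  (∀ v : Fin k → ZFSet, (∀ i, v i ∈ 𝕄.M) → t v ∈ 𝕄.M) ∧
    ∀ j, k ≤ j → RD 𝕄 (fun v => v j = t (fun i => v i))

theorem upd_fresh {k j : ℕ} (h : k ≤ j) (v : ℕ → ZFSet) (x : ZFSet) :
    (fun i : Fin k => Function.update v j x i) = fun i : Fin k => v i := by
  funext i
  have : (i : ℕ) ≠ j := by have := i.2; omega
  simp [Function.update_of_ne this]

theorem IsT.var (𝕄 : GBModel) (k : ℕ) (i : Fin k) : IsT 𝕄 k (fun v => v i) :=
  ⟨fun _ hv => hv i, fun j _ => RD.eq 𝕄 j i⟩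

theorem IsT.const {𝕄 : GBModel} {k : ℕ} {c : ZFSet} (hc : c ∈ 𝕄.M) :
    IsT 𝕄 k (fun _ => c) := by
  refine ⟨fun _ _ => hc, fun j _ => ?_⟩
  refine (RD.all (j + 1) (RD.iff (RD.mem 𝕄 (j + 1) j)
    (RD.cls (j + 1) (𝕄.sets_are_classes c hc)))).congr ?_
  intro v hv
  rw [← ext_M (hv j) hc]
  simp only [Function.update_apply]
  simp
  rfl

theorem IsT.pair {𝕄 : GBModel} {k : ℕ} {s t : (Fin k → ZFSet) → ZFSet} (hs : IsT 𝕄 k s)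
    (ht : IsT 𝕄 k t) : IsT 𝕄 k (fun v => (s v).pair (t v)) := by
  refine ⟨fun v hv => pair_memM (hs.1 v hv) (ht.1 v hv), fun j hj => ?_⟩
  refine (RD.ex (j + 1) (RD.ex (j + 2) (RD.and (hs.2 (j + 1) (by omega))
    (RD.and (ht.2 (j + 2) (by omega)) (RD.opair 𝕄 j))))).congr ?_
  intro v hv
  have e1 : ∀ (w : ℕ → ZFSet.{0}) x, (fun i : Fin k => Function.update w (j+1) x i)
    = fun i : Fin k => w i := upd_fresh (by omega)
  have e2 : ∀ (w : ℕ → ZFSet.{0}) x, (fun i : Fin k => Function.update w (j+2) x i)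
    = fun i : Fin k => w i := upd_fresh (by omega)
  simp only [e1, e2]
  simp only [Function.update_apply]
  simp
  have h3 := hs.1 _ (fun i => hv i)
  have h4 := ht.1 _ (fun i => hv i)
  simp [h3, h4]

theorem Dfn.mem {𝕄 : GBModel} {k : ℕ} {s t : (Fin k → ZFSet) → ZFSet} (hs : IsT 𝕄 k s)
    (ht : IsT 𝕄 k t) : Dfn 𝕄 k (fun v => s v ∈ t v) := by
  refine (RD.ex k (RD.ex (k + 1) (RD.and (hs.2 k (by omega))
    (RD.and (ht.2 (k + 1) (by omega)) (RD.mem 𝕄 k (k + 1)))))).congr ?_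
  intro v hv
  simp only [upd_fresh (le_refl k), upd_fresh (Nat.le_succ k)]
  simp only [Function.update_apply]
  simp
  have h3 := hs.1 _ (fun i => hv i)
  have h4 := ht.1 _ (fun i => hv i)
  simp [h3, h4]

theorem Dfn.eq {𝕄 : GBModel} {k : ℕ} {s t : (Fin k → ZFSet) → ZFSet} (hs : IsT 𝕄 k s)
    (ht : IsT 𝕄 k t) : Dfn 𝕄 k (fun v => s v = t v) := by
  refine (RD.ex k (RD.and (hs.2 k (by omega)) (ht.2 k (by omega)))).congr ?_
  intro v hv
  simp only [upd_fresh (le_refl k)]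
  simp
  exact ⟨fun h => h.2.symm, fun h => ⟨ht.1 _ (fun i => hv i), h.symm⟩⟩

theorem Dfn.cls {𝕄 : GBModel} {k : ℕ} {s : (Fin k → ZFSet) → ZFSet} {C : Set ZFSet}
    (hC : C ∈ 𝕄.Cls) (hs : IsT 𝕄 k s) : Dfn 𝕄 k (fun v => s v ∈ C) := by
  refine (RD.ex k (RD.and (hs.2 k (by omega)) (RD.cls k hC))).congr ?_
  intro v hv
  simp only [upd_fresh (le_refl k)]
  simp
  intro _
  exact hs.1 _ (fun i => hv i)

theorem Dfn.not {𝕄 : GBModel} {k : ℕ} {P : (Fin k → ZFSet) → Prop} (h : Dfn 𝕄 k P) :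
    Dfn 𝕄 k (fun v => ¬ P v) := RD.not h

theorem Dfn.or {𝕄 : GBModel} {k : ℕ} {P Q : (Fin k → ZFSet) → Prop} (h : Dfn 𝕄 k P)
    (h' : Dfn 𝕄 k Q) : Dfn 𝕄 k (fun v => P v ∨ Q v) := RD.or h h'

theorem Dfn.and {𝕄 : GBModel} {k : ℕ} {P Q : (Fin k → ZFSet) → Prop} (h : Dfn 𝕄 k P)
    (h' : Dfn 𝕄 k Q) : Dfn 𝕄 k (fun v => P v ∧ Q v) := RD.and h h'

theorem Dfn.imp {𝕄 : GBModel} {k : ℕ} {P Q : (Fin k → ZFSet) → Prop} (h : Dfn 𝕄 k P)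
    (h' : Dfn 𝕄 k Q) : Dfn 𝕄 k (fun v => P v → Q v) :=
  (RD.or (RD.not h) h').congr (fun v _ => by tauto)

theorem Dfn.congr {𝕄 : GBModel} {k : ℕ} {P Q : (Fin k → ZFSet) → Prop} (h : Dfn 𝕄 k P)
    (hPQ : ∀ v : Fin k → ZFSet, (∀ i, v i ∈ 𝕄.M) → (P v ↔ Q v)) : Dfn 𝕄 k Q :=
  RD.congr h (fun v hv => hPQ (fun i => v i) (fun i => hv i))

theorem Dfn.ex {𝕄 : GBModel} {k : ℕ} {Q : (Fin k → ZFSet) → ZFSet → Prop}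
    (h : Dfn 𝕄 (k + 1) (fun w => Q (fun i => w i.castSucc) (w (Fin.last k)))) :
    Dfn 𝕄 k (fun v => ∃ x ∈ 𝕄.M, Q v x) := by
  refine (RD.ex k h).congr ?_
  intro v hv
  simp [upd_fresh (le_refl k)]

theorem Dfn.all {𝕄 : GBModel} {k : ℕ} {Q : (Fin k → ZFSet) → ZFSet → Prop}
    (h : Dfn 𝕄 (k + 1) (fun w => Q (fun i => w i.castSucc) (w (Fin.last k)))) :
    Dfn 𝕄 k (fun v => ∀ x ∈ 𝕄.M, Q v x) := by
  refine (RD.all k h).congr ?_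
  intro v hv
  simp [upd_fresh (le_refl k)]

theorem cls_of_Dfn {𝕄 : GBModel} {P : ZFSet → Prop} (h : Dfn 𝕄 1 (fun v => P (v 0))) :
    {x : ZFSet | x ∈ 𝕄.M ∧ P x} ∈ 𝕄.Cls := by
  obtain ⟨φ, Cs, hC, H⟩ := h
  have := 𝕄.comprehension φ (fun _ => ∅) Cs (fun _ => 𝕄.empty_mem) hC
  convert this using 1
  ext x
  simp only [Set.mem_setOf_eq]
  refine and_congr_right fun hx => ?_
  rw [H _ (upd_mem (fun _ => 𝕄.empty_mem) 0 hx)]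
  simp

theorem sep_memM {𝕄 : GBModel} {P : ZFSet → Prop} (h : Dfn 𝕄 1 (fun v => P (v 0)))
    {a : ZFSet} (ha : a ∈ 𝕄.M) : ZFSet.sep P a ∈ 𝕄.M := by
  obtain ⟨b, hb, H⟩ := 𝕄.separation _ (cls_of_Dfn h) a ha
  have : ZFSet.sep P a = b := by
    ext x
    rw [H x, ZFSet.mem_sep]
    exact and_congr_right fun hx => ⟨fun h => ⟨𝕄.transitive _ ha _ hx, h⟩, fun h => h.2⟩
  rwa [this]

theorem coll_M {𝕄 : GBModel} {P : ZFSet → ZFSet → Prop}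
    (h : Dfn 𝕄 3 (fun v => P (v 1) (v 2)))
    {a : ZFSet} (ha : a ∈ 𝕄.M) (H : ∀ x ∈ a, ∃ y ∈ 𝕄.M, P x y) :
    ∃ b ∈ 𝕄.M, ∀ x ∈ a, ∃ y ∈ b, P x y := by
  have hc : {z : ZFSet | z ∈ 𝕄.M ∧ ∃ x ∈ 𝕄.M, ∃ y ∈ 𝕄.M, z = x.pair y ∧ P x y} ∈ 𝕄.Cls := by
    apply cls_of_Dfn
    refine Dfn.ex (Dfn.ex (Dfn.and (Dfn.eq (IsT.var _ _ _) (IsT.pair (IsT.var _ _ _)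
      (IsT.var _ _ _))) ?_))
    exact h
  obtain ⟨b, hb, K⟩ := 𝕄.collection _ hc a ha (by
    intro x hx
    obtain ⟨y, hy, hP⟩ := H x hx
    have hxM := 𝕄.transitive _ ha _ hx
    exact ⟨y, hy, pair_memM hxM hy, x, hxM, y, hy, rfl, hP⟩)
  refine ⟨b, hb, fun x hx => ?_⟩
  obtain ⟨y, hy, -, x', -, y', -, he, hP⟩ := K x hx
  obtain ⟨rfl, rfl⟩ := ZFSet.pair_inj.1 he
  exact ⟨y, hy, hP⟩


theorem IsT.ren {𝕄 : GBModel} {k m : ℕ} {t : (Fin k → ZFSet) → ZFSet} (ht : IsT 𝕄 k t)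
    (ρ : Fin k → Fin m) (hρ : ∀ i, (ρ i : ℕ) = i) : IsT 𝕄 m (fun w => t (fun i => w (ρ i))) := by
  refine ⟨fun v hv => ht.1 _ (fun i => hv _), fun j hj => ?_⟩
  have hk : k ≤ m := by
    rcases Nat.eq_zero_or_pos k with h | h
    · omega
    · have h1 := hρ ⟨k - 1, by omega⟩
      have h2 := (ρ ⟨k - 1, by omega⟩).2
      simp only at h1
      omega
  refine (ht.2 j (by omega)).congr (fun v _ => ?_)
  simp only [hρ]

theorem prod_memM {𝕄 : GBModel} {a b : ZFSet} (ha : a ∈ 𝕄.M) (hb : b ∈ 𝕄.M) :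
    ZFSet.prod a b ∈ 𝕄.M := by
  have h1 : ∀ u ∈ a, ∃ c ∈ 𝕄.M, ∀ v ∈ 𝕄.M, v ∈ b → u.pair v ∈ c := by
    intro u hu
    have huM := 𝕄.transitive _ ha _ hu
    obtain ⟨c, hc, H⟩ := coll_M (𝕄 := 𝕄) (P := fun v z => z = u.pair v)
      (by repeat' (first
              | exact IsT.var _ _ _ | exact IsT.const (by assumption) | refine IsT.pair ?_ ?_
              | exact IsT.ren (by assumption) _ (fun _ => rfl)
              | refine Dfn.cls (by assumption) ?_ | refine Dfn.mem ?_ ?_ | refine Dfn.eq ?_ ?_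
              | refine Dfn.ex ?_ | refine Dfn.all ?_ | refine Dfn.and ?_ ?_ | refine Dfn.or ?_ ?_
              | refine Dfn.not ?_ | refine Dfn.imp ?_ ?_)) hb (fun v hv => ⟨_, pair_memM huM (𝕄.transitive _ hb _ hv), rfl⟩)
    refine ⟨c, hc, fun v _ hv => ?_⟩
    obtain ⟨y, hy, rfl⟩ := H v hv
    exact hy
  obtain ⟨d, hd, H⟩ := coll_M (𝕄 := 𝕄)
    (P := fun u c => ∀ v ∈ 𝕄.M, v ∈ b → u.pair v ∈ c) (by repeat' (first
                                                              | exact IsT.var _ _ _ | exact IsT.const (by assumption) | refine IsT.pair ?_ ?_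
                                                              | exact IsT.ren (by assumption) _ (fun _ => rfl)
                                                              | refine Dfn.cls (by assumption) ?_ | refine Dfn.mem ?_ ?_ | refine Dfn.eq ?_ ?_
                                                              | refine Dfn.ex ?_ | refine Dfn.all ?_ | refine Dfn.and ?_ ?_ | refine Dfn.or ?_ ?_
                                                              | refine Dfn.not ?_ | refine Dfn.imp ?_ ?_)) ha h1
  have h2 : ZFSet.sep (fun z => ∃ u ∈ 𝕄.M, u ∈ a ∧ ∃ v ∈ 𝕄.M, v ∈ b ∧ z = u.pair v) (⋃₀ d : ZFSet)
      ∈ 𝕄.M := sep_memM (by repeat' (first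
                                | exact IsT.var _ _ _ | exact IsT.const (by assumption) | refine IsT.pair ?_ ?_
                                | exact IsT.ren (by assumption) _ (fun _ => rfl)
                                | refine Dfn.cls (by assumption) ?_ | refine Dfn.mem ?_ ?_ | refine Dfn.eq ?_ ?_
                                | refine Dfn.ex ?_ | refine Dfn.all ?_ | refine Dfn.and ?_ ?_ | refine Dfn.or ?_ ?_
                                | refine Dfn.not ?_ | refine Dfn.imp ?_ ?_)) (𝕄.sUnion_mem _ hd)
  convert h2 using 1
  ext z
  rw [ZFSet.mem_prod, ZFSet.mem_sep]
  constructor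
  · rintro ⟨u, hu, v, hv, rfl⟩
    obtain ⟨c, hc, K⟩ := H u hu
    have hvM := 𝕄.transitive _ hb _ hv
    exact ⟨ZFSet.mem_sUnion_of_mem (K v hvM hv) hc, u, 𝕄.transitive _ ha _ hu, hu, v, hvM, hv, rfl⟩
  · rintro ⟨-, u, -, hu, v, -, hv, rfl⟩
    exact ⟨u, hu, v, hv, rfl⟩

/-- Transitivity of a set, with quantifiers relativized to the model. -/
def TrM (𝕄 : GBModel) (t : ZFSet) : Prop := ∀ a ∈ 𝕄.M, a ∈ t → ∀ b ∈ 𝕄.M, b ∈ a → b ∈ t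

theorem exists_trans {𝕄 : GBModel} (x : ZFSet) :
    x ∈ 𝕄.M → ∃ t ∈ 𝕄.M, x ∈ t ∧ TrM 𝕄 t := by
  refine ZFSet.inductionOn x ?_
  intro x ih hx
  obtain ⟨b, hb, H⟩ := coll_M (𝕄 := 𝕄) (P := fun y t => y ∈ t ∧ TrM 𝕄 t)
    (by
      unfold TrM
      repeat' (first
          | exact IsT.var _ _ _ | exact IsT.const (by assumption) | refine IsT.pair ?_ ?_
          | exact IsT.ren (by assumption) _ (fun _ => rfl)
          | refine Dfn.cls (by assumption) ?_ | refine Dfn.mem ?_ ?_ | refine Dfn.eq ?_ ?_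
          | refine Dfn.ex ?_ | refine Dfn.all ?_ | refine Dfn.and ?_ ?_ | refine Dfn.or ?_ ?_
          | refine Dfn.not ?_ | refine Dfn.imp ?_ ?_)) hx (fun y hy => ih y hy (𝕄.transitive _ hx _ hy))
  have hs : ZFSet.sep (TrM 𝕄) b ∈ 𝕄.M := sep_memM (by
    unfold TrM
    repeat' (first
        | exact IsT.var _ _ _ | exact IsT.const (by assumption) | refine IsT.pair ?_ ?_
        | exact IsT.ren (by assumption) _ (fun _ => rfl)
        | refine Dfn.cls (by assumption) ?_ | refine Dfn.mem ?_ ?_ | refine Dfn.eq ?_ ?_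
        | refine Dfn.ex ?_ | refine Dfn.all ?_ | refine Dfn.and ?_ ?_ | refine Dfn.or ?_ ?_
        | refine Dfn.not ?_ | refine Dfn.imp ?_ ?_)) hb
  refine ⟨(⋃₀ (ZFSet.sep (TrM 𝕄) b) : ZFSet) ∪ {x},
    union_memM (𝕄.sUnion_mem _ hs) (singleton_memM hx), by simp, ?_⟩
  intro c hc hct d hd hdc
  rw [ZFSet.mem_union] at hct ⊢
  left
  rcases hct with h | h
  · obtain ⟨t, ht, hct⟩ := ZFSet.mem_sUnion.1 h
    exact ZFSet.mem_sUnion_of_mem ((ZFSet.mem_sep.1 ht).2 c hc hct d hd hdc) ht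
  · rw [ZFSet.mem_singleton] at h
    subst h
    obtain ⟨t, ht, hdt, htr⟩ := H d hdc
    exact ZFSet.mem_sUnion_of_mem hdt (ZFSet.mem_sep.2 ⟨ht, htr⟩)

/-! ### The relation `q ⊩ σ = x̌` for a set forcing -/

/-- One step of the recursion for the relation `q ⊩ σ = x̌`. -/
def Clause (𝕄 : GBModel) (Q : ZFSet) (L : Set ZFSet) (W : ZFSet → ZFSet → ZFSet → Prop)
    (q σ x : ZFSet) : Prop :=
  (∀ τ ∈ 𝕄.M, ∀ p ∈ 𝕄.M, τ.pair p ∈ σ → ∀ r ∈ 𝕄.M, r ∈ Q → r.pair q ∈ L → r.pair p ∈ L →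
    ∃ s ∈ 𝕄.M, s ∈ Q ∧ s.pair r ∈ L ∧ ∃ y ∈ 𝕄.M, y ∈ x ∧ W s τ y) ∧
  (∀ y ∈ 𝕄.M, y ∈ x → ∀ r ∈ 𝕄.M, r ∈ Q → r.pair q ∈ L →
    ∃ s ∈ 𝕄.M, s ∈ Q ∧ s.pair r ∈ L ∧ ∃ τ ∈ 𝕄.M, ∃ p ∈ 𝕄.M, τ.pair p ∈ σ ∧ s.pair p ∈ L ∧ W s τ y)

theorem Clause.mono {𝕄 : GBModel} {Q : ZFSet} {L : Set ZFSet}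
    {W W' : ZFSet → ZFSet → ZFSet → Prop} {q σ x : ZFSet} (h : Clause 𝕄 Q L W q σ x)
    (hW : ∀ s τ p y, s ∈ Q → τ.pair p ∈ σ → y ∈ x → W s τ y → W' s τ y) :
    Clause 𝕄 Q L W' q σ x := by
  refine ⟨?_, ?_⟩
  · intro τ hτ p hp hm r hr hrQ h1 h2
    obtain ⟨s, hs, hsQ, hsr, y, hy, hyx, hw⟩ := h.1 τ hτ p hp hm r hr hrQ h1 h2
    exact ⟨s, hs, hsQ, hsr, y, hy, hyx, hW s τ p y hsQ hm hyx hw⟩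
  · intro y hy hyx r hr hrQ h1
    obtain ⟨s, hs, hsQ, hsr, τ, hτ, p, hp, hm, hsp, hw⟩ := h.2 y hy hyx r hr hrQ h1
    exact ⟨s, hs, hsQ, hsr, τ, hτ, p, hp, hm, hsp, hW s τ p y hsQ hm hyx hw⟩

/-- `W` is a set of triples each of which is justified by other triples of `W`. -/
def Post (𝕄 : GBModel) (Q : ZFSet) (L : Set ZFSet) (W : ZFSet) : Prop :=
  ∀ q ∈ 𝕄.M, ∀ σ ∈ 𝕄.M, ∀ x ∈ 𝕄.M, q.pair (σ.pair x) ∈ W →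
    q ∈ Q ∧ Clause 𝕄 Q L (fun s τ y => s.pair (τ.pair y) ∈ W) q σ x

/-- The relation `q ⊩ σ = x̌`. -/
def RR (𝕄 : GBModel) (Q : ZFSet) (L : Set ZFSet) (q σ x : ZFSet) : Prop :=
  ∃ W ∈ 𝕄.M, Post 𝕄 Q L W ∧ q.pair (σ.pair x) ∈ W

theorem Dfn.post {𝕄 : GBModel} {Q : ZFSet} {L : Set ZFSet} (hQ : Q ∈ 𝕄.M) (hL : L ∈ 𝕄.Cls)
    {k : ℕ} (i : Fin k) : Dfn 𝕄 k (fun v => Post 𝕄 Q L (v i)) := by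
  unfold Post Clause
  repeat' (first
      | exact IsT.var _ _ _ | exact IsT.const (by assumption) | refine IsT.pair ?_ ?_
      | exact IsT.ren (by assumption) _ (fun _ => rfl)
      | refine Dfn.cls (by assumption) ?_ | refine Dfn.mem ?_ ?_ | refine Dfn.eq ?_ ?_
      | refine Dfn.ex ?_ | refine Dfn.all ?_ | refine Dfn.and ?_ ?_ | refine Dfn.or ?_ ?_
      | refine Dfn.not ?_ | refine Dfn.imp ?_ ?_)

theorem Dfn.RR {𝕄 : GBModel} {Q : ZFSet} {L : Set ZFSet} (hQ : Q ∈ 𝕄.M) (hL : L ∈ 𝕄.Cls)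
    {k : ℕ} {a b c : (Fin k → ZFSet) → ZFSet} (ha : IsT 𝕄 k a) (hb : IsT 𝕄 k b)
    (hc : IsT 𝕄 k c) : Dfn 𝕄 k (fun v => RR 𝕄 Q L (a v) (b v) (c v)) := by
  unfold CF.RR
  refine Dfn.ex (Dfn.and (Dfn.post hQ hL _) ?_)
  repeat' (first
      | exact IsT.var _ _ _ | exact IsT.const (by assumption) | refine IsT.pair ?_ ?_
      | exact IsT.ren (by assumption) _ (fun _ => rfl)
      | refine Dfn.cls (by assumption) ?_ | refine Dfn.mem ?_ ?_ | refine Dfn.eq ?_ ?_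
      | refine Dfn.ex ?_ | refine Dfn.all ?_ | refine Dfn.and ?_ ?_ | refine Dfn.or ?_ ?_
      | refine Dfn.not ?_ | refine Dfn.imp ?_ ?_)

theorem dom_memM {σ τ p : ZFSet} (h : τ.pair p ∈ σ) : τ ∈ (⋃₀ (⋃₀ σ : ZFSet) : ZFSet) :=
  ZFSet.mem_sUnion_of_mem (z := {τ}) (by simp)
    (ZFSet.mem_sUnion_of_mem (z := τ.pair p) (by simp [ZFSet.pair]) h)

theorem RR.data {𝕄 : GBModel} {Q : ZFSet} {L : Set ZFSet} {q σ x : ZFSet}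
    (h : RR 𝕄 Q L q σ x) : q ∈ 𝕄.M ∧ σ ∈ 𝕄.M ∧ x ∈ 𝕄.M ∧ q ∈ Q ∧
      Clause 𝕄 Q L (RR 𝕄 Q L) q σ x := by
  obtain ⟨W, hW, hP, hm⟩ := h
  have h0 := 𝕄.transitive _ hW _ hm
  have h1 := pair_left_memM h0
  have h2 := pair_left_memM (pair_right_memM h0)
  have h3 := pair_right_memM (pair_right_memM h0)
  obtain ⟨h4, h5⟩ := hP q h1 σ h2 x h3 hm
  exact ⟨h1, h2, h3, h4, h5.mono (fun s τ p y _ _ _ hw => ⟨W, hW, hP, hw⟩)⟩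

theorem RR.intro {𝕄 : GBModel} {Q : ZFSet} {L : Set ZFSet} (hQ : Q ∈ 𝕄.M) (hL : L ∈ 𝕄.Cls)
    {q σ x : ZFSet} (hq : q ∈ Q) (hσ : σ ∈ 𝕄.M) (hx : x ∈ 𝕄.M)
    (h : Clause 𝕄 Q L (RR 𝕄 Q L) q σ x) : RR 𝕄 Q L q σ x := by
  have hqM := 𝕄.transitive _ hQ _ hq
  have hU : ZFSet.sep (fun w => ∃ s ∈ 𝕄.M, ∃ τ ∈ 𝕄.M, ∃ y ∈ 𝕄.M, w = s.pair (τ.pair y) ∧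
      RR 𝕄 Q L s τ y) (ZFSet.prod Q (ZFSet.prod (⋃₀ (⋃₀ σ : ZFSet) : ZFSet) x)) ∈ 𝕄.M := by
    refine sep_memM ?_ (prod_memM hQ (prod_memM (𝕄.sUnion_mem _ (𝕄.sUnion_mem _ hσ)) hx))
    repeat' (first
        | exact IsT.var _ _ _ | exact IsT.const (by assumption) | refine IsT.pair ?_ ?_
        | exact IsT.ren (by assumption) _ (fun _ => rfl) | exact Dfn.post (by assumption) (by assumption) _
        | refine Dfn.RR (by assumption) (by assumption) ?_ ?_ ?_
        | refine Dfn.cls (by assumption) ?_ | refine Dfn.mem ?_ ?_ | refine Dfn.eq ?_ ?_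
        | refine Dfn.ex ?_ | refine Dfn.all ?_ | refine Dfn.and ?_ ?_ | refine Dfn.or ?_ ?_
        | refine Dfn.not ?_ | refine Dfn.imp ?_ ?_)
  obtain ⟨b, hb, H⟩ := coll_M (𝕄 := 𝕄) (P := fun w W => Post 𝕄 Q L W ∧ w ∈ W) (by repeat' (first
                                                                                      | exact IsT.var _ _ _ | exact IsT.const (by assumption) | refine IsT.pair ?_ ?_
                                                                                      | exact IsT.ren (by assumption) _ (fun _ => rfl) | exact Dfn.post (by assumption) (by assumption) _
                                                                                      | refine Dfn.RR (by assumption) (by assumption) ?_ ?_ ?_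
                                                                                      | refine Dfn.cls (by assumption) ?_ | refine Dfn.mem ?_ ?_ | refine Dfn.eq ?_ ?_
                                                                                      | refine Dfn.ex ?_ | refine Dfn.all ?_ | refine Dfn.and ?_ ?_ | refine Dfn.or ?_ ?_
                                                                                      | refine Dfn.not ?_ | refine Dfn.imp ?_ ?_)) hU (by
    intro w hw
    obtain ⟨-, s, -, τ, -, y, -, rfl, W, hW, hP, hm⟩ := ZFSet.mem_sep.1 hw
    exact ⟨W, hW, hP, hm⟩)
  have hs : ZFSet.sep (Post 𝕄 Q L) b ∈ 𝕄.M := sep_memM (by repeat' (first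
                                                               | exact IsT.var _ _ _ | exact IsT.const (by assumption) | refine IsT.pair ?_ ?_
                                                               | exact IsT.ren (by assumption) _ (fun _ => rfl) | exact Dfn.post (by assumption) (by assumption) _
                                                               | refine Dfn.RR (by assumption) (by assumption) ?_ ?_ ?_
                                                               | refine Dfn.cls (by assumption) ?_ | refine Dfn.mem ?_ ?_ | refine Dfn.eq ?_ ?_
                                                               | refine Dfn.ex ?_ | refine Dfn.all ?_ | refine Dfn.and ?_ ?_ | refine Dfn.or ?_ ?_
                                                               | refine Dfn.not ?_ | refine Dfn.imp ?_ ?_)) hb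
  refine ⟨(⋃₀ (ZFSet.sep (Post 𝕄 Q L) b) : ZFSet) ∪ {q.pair (σ.pair x)},
    union_memM (𝕄.sUnion_mem _ hs) (singleton_memM (pair_memM hqM (pair_memM hσ hx))), ?_, by simp⟩
  intro q' hq' σ' hσ' x' hx' hm
  rcases ZFSet.mem_union.1 hm with hm | hm
  · obtain ⟨W, hW, hmW⟩ := ZFSet.mem_sUnion.1 hm
    obtain ⟨h1, h2⟩ := (ZFSet.mem_sep.1 hW).2 q' hq' σ' hσ' x' hx' hmW
    exact ⟨h1, h2.mono (fun s τ p y _ _ _ hw =>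
      ZFSet.mem_union.2 (Or.inl (ZFSet.mem_sUnion_of_mem hw hW)))⟩
  · rw [ZFSet.mem_singleton, ZFSet.pair_inj, ZFSet.pair_inj] at hm
    obtain ⟨rfl, rfl, rfl⟩ := hm
    refine ⟨hq, h.mono (fun s τ p y hsQ hτp hy hw => ?_)⟩
    obtain ⟨hsM, hτM, hyM, -, -⟩ := hw.data
    obtain ⟨W, hWb, hP, hm⟩ := H (s.pair (τ.pair y)) (ZFSet.mem_sep.2
      ⟨ZFSet.pair_mem_prod.2 ⟨hsQ, ZFSet.pair_mem_prod.2 ⟨dom_memM hτp, hy⟩⟩,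
        s, hsM, τ, hτM, y, hyM, rfl, hw⟩)
    exact ZFSet.mem_union.2 (Or.inl (ZFSet.mem_sUnion_of_mem hm (ZFSet.mem_sep.2 ⟨hWb, hP⟩)))

theorem RR.mono {𝕄 : GBModel} {Q : ZFSet} {L : Set ZFSet} (hQ : Q ∈ 𝕄.M) (hL : L ∈ 𝕄.Cls)
    (htr : ∀ a b c : ZFSet, a.pair b ∈ L → b.pair c ∈ L → a.pair c ∈ L)
    {q q' σ x : ZFSet} (h : RR 𝕄 Q L q σ x) (hq' : q' ∈ Q) (hle : q'.pair q ∈ L) :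
    RR 𝕄 Q L q' σ x := by
  obtain ⟨h1, h2, h3, h4, h5⟩ := h.data
  refine RR.intro hQ hL hq' h2 h3 ⟨?_, ?_⟩
  · intro τ hτ p hp hm r hr hrQ hrq hrp
    exact h5.1 τ hτ p hp hm r hr hrQ (htr _ _ _ hrq hle) hrp
  · intro y hy hyx r hr hrQ hrq
    exact h5.2 y hy hyx r hr hrQ (htr _ _ _ hrq hle)

theorem RR.unique {𝕄 : GBModel} {Q : ZFSet} {L : Set ZFSet} (hQ : Q ∈ 𝕄.M) (hL : L ∈ 𝕄.Cls)
    (htr : ∀ a b c : ZFSet, a.pair b ∈ L → b.pair c ∈ L → a.pair c ∈ L)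
    (hrefl : ∀ q ∈ Q, q.pair q ∈ L) (x : ZFSet) :
    ∀ q σ x', RR 𝕄 Q L q σ x → RR 𝕄 Q L q σ x' → x = x' := by
  refine ZFSet.inductionOn x ?_
  intro x ih q σ x' h h'
  obtain ⟨hq, hσ, hx, hqQ, hc⟩ := h.data
  obtain ⟨-, -, hx', -, hc'⟩ := h'.data
  ext y
  constructor
  · intro hy
    obtain ⟨s, hs, hsQ, hsq, τ, hτ, p, hp, hm, hsp, hw⟩ :=
      hc.2 y (𝕄.transitive _ hx _ hy) hy q hq hqQ (hrefl q hqQ)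
    obtain ⟨t, ht, htQ, hts, y', hy'M, hy', hw'⟩ := hc'.1 τ hτ p hp hm s hs hsQ hsq hsp
    rw [ih y hy t τ y' (hw.mono hQ hL htr htQ hts) hw']
    exact hy'
  · intro hy
    obtain ⟨s, hs, hsQ, hsq, τ, hτ, p, hp, hm, hsp, hw⟩ :=
      hc'.2 y (𝕄.transitive _ hx' _ hy) hy q hq hqQ (hrefl q hqQ)
    obtain ⟨t, ht, htQ, hts, y', hy'M, hy', hw'⟩ := hc.1 τ hτ p hp hm s hs hsQ hsq hsp
    rw [← ih y' hy' t τ y hw' (hw.mono hQ hL htr htQ hts)]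
    exact hy'

theorem mem_nameEval {G : Set ZFSet} {σ y : ZFSet} :
    y ∈ nameEval G σ ↔ ∃ τ p : ZFSet, p ∈ G ∧ τ.pair p ∈ σ ∧ nameEval G τ = y := by
  unfold nameEval
  rw [nameEvalAux]
  unfold zimage
  rw [@ZFSet.mem_image _ (Classical.allZFSetDefinable _)]
  have hr : ∀ τ p : ZFSet, τ.pair p ∈ σ → τ.rank < σ.rank := by
    intro τ p h
    have h1 : τ.rank < ({τ} : ZFSet).rank := ZFSet.rank_lt_of_mem (by simp)
    have h2 : ({τ} : ZFSet).rank < (τ.pair p).rank :=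
      ZFSet.rank_lt_of_mem (by simp [ZFSet.pair])
    exact h1.trans (h2.trans (ZFSet.rank_lt_of_mem h))
  constructor
  · rintro ⟨τ, hτ, he⟩
    obtain ⟨-, p, hp, hm⟩ := ZFSet.mem_sep.1 hτ
    rw [dif_pos (hr τ p hm)] at he
    exact ⟨τ, p, hp, hm, he⟩
  · rintro ⟨τ, p, hp, hm, he⟩
    refine ⟨τ, ZFSet.mem_sep.2 ⟨dom_memM hm, p, hp, hm⟩, ?_⟩
    rw [dif_pos (hr τ p hm)]
    exact he

theorem pair_mem_trans {𝕄 : GBModel} {t σ τ p : ZFSet} (ht : t ∈ 𝕄.M) (htr : TrM 𝕄 t)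
    (hσ : σ ∈ t) (h : τ.pair p ∈ σ) : τ ∈ t ∧ p ∈ t := by
  have tr : ∀ a b : ZFSet, a ∈ t → b ∈ a → b ∈ t := fun a b ha hb =>
    htr a (𝕄.transitive _ ht _ ha) ha b (𝕄.transitive _ (𝕄.transitive _ ht _ ha) _ hb) hb
  have h1 := tr _ _ hσ h
  have h2 : ({τ, p} : ZFSet) ∈ t := tr _ _ h1 (by simp [ZFSet.pair])
  exact ⟨tr _ _ h2 (by simp), tr _ _ h2 (by simp)⟩

theorem truth {𝕄 : GBModel} {Q : ZFSet} {L : Set ZFSet} (hQ : Q ∈ 𝕄.M) (hL : L ∈ 𝕄.Cls)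
    (htr : ∀ a b c : ZFSet, a.pair b ∈ L → b.pair c ∈ L → a.pair c ∈ L)
    (hrefl : ∀ q ∈ Q, q.pair q ∈ L) (H : Set ZFSet) (hHQ : ∀ q ∈ H, q ∈ Q)
    (hup : ∀ p ∈ H, ∀ q ∈ Q, p.pair q ∈ L → q ∈ H)
    (hdir : ∀ p ∈ H, ∀ q ∈ H, ∃ r ∈ H, r.pair p ∈ L ∧ r.pair q ∈ L)
    (hgen : ∀ D ∈ 𝕄.Cls, (∀ d ∈ D, d ∈ Q) → (∀ q ∈ Q, ∃ d ∈ D, d.pair q ∈ L) → ∃ d ∈ H, d ∈ D)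
    {t : ZFSet} (ht : t ∈ 𝕄.M) (htt : TrM 𝕄 t)
    (htQ : ∀ p ∈ t, ∀ r : ZFSet, r.pair p ∈ L → p ∈ Q) (x : ZFSet) :
    ∀ σ ∈ t, x ∈ 𝕄.M → nameEval H σ = x → ∃ q ∈ H, RR 𝕄 Q L q σ x := by
  refine ZFSet.inductionOn x ?_
  intro x ih σ hσ hx hev
  have hσM := 𝕄.transitive _ ht _ hσ
  have hD : {q : ZFSet | q ∈ 𝕄.M ∧ (q ∈ Q ∧ (RR 𝕄 Q L q σ x ∨
      (∃ τ ∈ 𝕄.M, ∃ p ∈ 𝕄.M, τ.pair p ∈ σ ∧ q.pair p ∈ L ∧ ∀ s ∈ 𝕄.M, s ∈ Q → s.pair q ∈ L →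
        ∀ y ∈ 𝕄.M, y ∈ x → ¬ RR 𝕄 Q L s τ y) ∨
      (∃ y ∈ 𝕄.M, y ∈ x ∧ ∀ s ∈ 𝕄.M, s ∈ Q → s.pair q ∈ L → ∀ τ ∈ 𝕄.M, ∀ p ∈ 𝕄.M,
        τ.pair p ∈ σ → s.pair p ∈ L → ¬ RR 𝕄 Q L s τ y)))} ∈ 𝕄.Cls := by
    apply cls_of_Dfn
    repeat' (first
        | exact IsT.var _ _ _ | exact IsT.const (by assumption) | refine IsT.pair ?_ ?_
        | exact IsT.ren (by assumption) _ (fun _ => rfl) | exact Dfn.post (by assumption) (by assumption) _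
        | refine Dfn.RR (by assumption) (by assumption) ?_ ?_ ?_
        | refine Dfn.cls (by assumption) ?_ | refine Dfn.mem ?_ ?_ | refine Dfn.eq ?_ ?_
        | refine Dfn.ex ?_ | refine Dfn.all ?_ | refine Dfn.and ?_ ?_ | refine Dfn.or ?_ ?_
        | refine Dfn.not ?_ | refine Dfn.imp ?_ ?_)
  obtain ⟨q, hqH, hqM, hqQ, hq⟩ := hgen _ hD (fun d hd => hd.2.1) (by
    intro q hqQ
    have hqM := 𝕄.transitive _ hQ _ hqQ
    by_cases hc : Clause 𝕄 Q L (RR 𝕄 Q L) q σ x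
    · exact ⟨q, ⟨hqM, hqQ, Or.inl (RR.intro hQ hL hqQ hσM hx hc)⟩, hrefl q hqQ⟩
    · unfold Clause at hc
      rw [not_and_or] at hc
      rcases hc with hc | hc
      · push Not at hc
        obtain ⟨τ, hτ, p, hp, hm, r, hr, hrQ, hrq, hrp, hn⟩ := hc
        exact ⟨r, ⟨hr, hrQ, Or.inr (Or.inl ⟨τ, hτ, p, hp, hm, hrp, hn⟩)⟩, hrq⟩
      · push Not at hc
        obtain ⟨y, hy, hyx, r, hr, hrQ, hrq, hn⟩ := hc
        exact ⟨r, ⟨hr, hrQ, Or.inr (Or.inr ⟨y, hy, hyx, hn⟩)⟩, hrq⟩)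
  rcases hq with hq | ⟨τ, hτ, p, hp, hm, hqp, hn⟩ | ⟨y, hy, hyx, hn⟩
  · exact ⟨q, hqH, hq⟩
  · exfalso
    obtain ⟨hτt, hpt⟩ := pair_mem_trans ht htt hσ hm
    have hpH : p ∈ H := hup q hqH p (htQ p hpt q hqp) hqp
    have hyx : nameEval H τ ∈ x := by
      rw [← hev, mem_nameEval]
      exact ⟨τ, p, hpH, hm, rfl⟩
    have hyM := 𝕄.transitive _ hx _ hyx
    obtain ⟨s, hsH, hs⟩ := ih _ hyx τ hτt hyM rfl
    obtain ⟨r, hrH, hrs, hrq⟩ := hdir s hsH q hqH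
    exact hn r (𝕄.transitive _ hQ _ (hHQ r hrH)) (hHQ r hrH) hrq _ hyM hyx
      (hs.mono hQ hL htr (hHQ r hrH) hrs)
  · exfalso
    have hyx' := hyx
    rw [← hev, mem_nameEval] at hyx'
    obtain ⟨τ, p, hpH, hm, he⟩ := hyx'
    obtain ⟨hτt, hpt⟩ := pair_mem_trans ht htt hσ hm
    obtain ⟨s, hsH, hs⟩ := ih y hyx τ hτt hy he
    obtain ⟨r, hrH, hrs, hrq⟩ := hdir s hsH q hqH
    obtain ⟨r', hrH', hrr, hrp⟩ := hdir r hrH p hpH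
    exact hn r' (𝕄.transitive _ hQ _ (hHQ r' hrH')) (hHQ r' hrH') (htr _ _ _ hrr hrq) τ
      (𝕄.transitive _ ht _ hτt) p (𝕄.transitive _ ht _ hpt) hm hrp
      (hs.mono hQ hL htr (hHQ r' hrH') (htr _ _ _ hrr hrs))

theorem nameEval_congr {𝕄 : GBModel} {t : ZFSet} (ht : t ∈ 𝕄.M) (htt : TrM 𝕄 t)
    {G H : Set ZFSet} (hGH : ∀ p ∈ t, (p ∈ G ↔ p ∈ H)) (o : Ordinal) :
    ∀ σ ∈ t, σ.rank = o → nameEval G σ = nameEval H σ := by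
  induction o using Ordinal.induction with
  | h o ih =>
    intro σ hσ ho
    subst ho
    ext y
    rw [mem_nameEval, mem_nameEval]
    refine exists_congr fun τ => exists_congr fun p => ?_
    by_cases hm : τ.pair p ∈ σ
    · obtain ⟨hτ, hp⟩ := pair_mem_trans ht htt hσ hm
      have h1 : τ.rank < ({τ} : ZFSet).rank := ZFSet.rank_lt_of_mem (by simp)
      have h2 : ({τ} : ZFSet).rank < (τ.pair p).rank :=
        ZFSet.rank_lt_of_mem (by simp [ZFSet.pair])
      rw [ih _ (h1.trans (h2.trans (ZFSet.rank_lt_of_mem hm))) τ hτ rfl, hGH p hp]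
    · simp [hm]

/-- If `ℙ` is a notion of class forcing for `𝕄 ⊨ GB⁻` that is approachable
by projections, then `ℙ` has bounded names. -/
theorem approachable_implies_bounded_names
    (𝕄 : GBModel) (F : ClassForcing 𝕄) (h : ApproachableByProjections 𝕄 F) :
    HasBoundedNames 𝕄 F := by
  obtain ⟨Pi, hPi, hA⟩ := h
  intro σ hσ _
  obtain ⟨t, ht, hσt, htt⟩ := exists_trans σ hσ
  have hPc := F.P_cls
  have hX : ZFSet.sep (fun x => x ∈ F.P) t ∈ 𝕄.M :=
    sep_memM (Dfn.cls hPc (IsT.var _ _ _)) ht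
  obtain ⟨y, hy, Q, hQ, hQP, hXQ, -, f, hf, hfQ, -, hfmono, hfproj, hfX, hfid⟩ :=
    hA _ hX (fun x hx => (ZFSet.mem_sep.1 hx).2)
  generalize hXe : ZFSet.sep (fun x => x ∈ F.P) t = X at hX hXQ hf hfX hfid
  have memX : ∀ p, p ∈ X ↔ p ∈ t ∧ p ∈ F.P := by
    intro p
    rw [← hXe, ZFSet.mem_sep]
  have hL := F.le_cls
  generalize hLe : {x : ZFSet | ∃ p ∈ F.P, ∃ q ∈ F.P, F.le p q ∧ x = p.pair q} = L at hL
  have memL : ∀ p q : ZFSet, p.pair q ∈ L ↔ p ∈ F.P ∧ q ∈ F.P ∧ F.le p q := by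
    intro p q
    rw [← hLe]
    constructor
    · rintro ⟨p', hp', q', hq', hle, he⟩
      obtain ⟨rfl, rfl⟩ := ZFSet.pair_inj.1 he
      exact ⟨hp', hq', hle⟩
    · rintro ⟨hp, hq, hle⟩
      exact ⟨p, hp, q, hq, hle, rfl⟩
  have hQP' : ∀ q ∈ Q, q ∈ F.P := fun q hq => hQP hq
  have htr : ∀ a b c : ZFSet, a.pair b ∈ L → b.pair c ∈ L → a.pair c ∈ L := by
    intro a b c h1 h2
    rw [memL] at *
    exact ⟨h1.1, h2.2.1, F.le_trans _ _ _ h1.2.2 h2.2.2⟩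
  have hrefl : ∀ q ∈ Q, q.pair q ∈ L := fun q hq =>
    (memL q q).2 ⟨hQP' q hq, hQP' q hq, F.le_refl q (hQP' q hq)⟩
  have hPM : ∀ p ∈ F.P, p ∈ 𝕄.M := fun p hp => 𝕄.classes_sub _ hPc hp
  have hQ' : ZFSet.sep (fun q => ∃ x ∈ 𝕄.M, RR 𝕄 Q L q σ x) Q ∈ 𝕄.M := sep_memM (by
    repeat' (first
        | exact IsT.var _ _ _ | exact IsT.const (by assumption) | refine IsT.pair ?_ ?_
        | exact IsT.ren (by assumption) _ (fun _ => rfl)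
        | refine Dfn.RR (by assumption) (by assumption) ?_ ?_ ?_
        | refine Dfn.cls (by assumption) ?_ | refine Dfn.mem ?_ ?_ | refine Dfn.eq ?_ ?_
        | refine Dfn.ex ?_ | refine Dfn.all ?_ | refine Dfn.and ?_ ?_)) hQ
  obtain ⟨b, hb, hcov⟩ := coll_M (𝕄 := 𝕄) (P := fun q x => RR 𝕄 Q L q σ x)
    (by
      repeat' (first
          | exact IsT.var _ _ _ | exact IsT.const (by assumption) | refine IsT.pair ?_ ?_
          | exact IsT.ren (by assumption) _ (fun _ => rfl)
          | refine Dfn.RR (by assumption) (by assumption) ?_ ?_ ?_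
          | refine Dfn.cls (by assumption) ?_ | refine Dfn.mem ?_ ?_ | refine Dfn.eq ?_ ?_
          | refine Dfn.ex ?_ | refine Dfn.all ?_ | refine Dfn.and ?_ ?_)) hQ' (fun q hq => (ZFSet.mem_sep.1 hq).2)
  refine ⟨b, hb, ?_⟩
  rintro x ⟨⟨G, ⟨⟨hGP, hGne, hGup, hGdir⟩, hGgen⟩, hev⟩, hxM⟩
  have hfP : ∀ p ∈ F.P, f p ∈ Q := fun p hp => hfQ p hp
  have key := truth hQ hL htr hrefl {q | q ∈ Q ∧ ∃ g ∈ G, (f g).pair q ∈ L}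
    (fun q hq => hq.1)
    (by
      rintro p ⟨hpQ, g, hg, hgp⟩ q hq hpq
      exact ⟨hq, g, hg, htr _ _ _ hgp hpq⟩)
    (by
      rintro p ⟨hpQ, g, hg, hgp⟩ q ⟨hqQ, g', hg', hgq⟩
      obtain ⟨r, hr, hrg, hrg'⟩ := hGdir g hg g' hg'
      have hrP := hGP hr
      have hfrP := hQP' _ (hfP r hrP)
      refine ⟨f r, ⟨hfP r hrP, r, hr, hrefl _ (hfP r hrP)⟩, ?_, ?_⟩
      · exact htr _ _ _ ((memL _ _).2 ⟨hfrP, hQP' _ (hfP g (hGP hg)),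
          hfmono r hrP g (hGP hg) hrg⟩) hgp
      · exact htr _ _ _ ((memL _ _).2 ⟨hfrP, hQP' _ (hfP g' (hGP hg')),
          hfmono r hrP g' (hGP hg') hrg'⟩) hgq)
    (by
      intro D hD hDQ hDd
      have hE : {p : ZFSet | p ∈ 𝕄.M ∧ (p ∈ F.P ∧ ∃ d ∈ 𝕄.M, d ∈ D ∧ ∃ v ∈ 𝕄.M,
          X.pair (y.pair (p.pair v)) ∈ Pi ∧ v.pair d ∈ L)} ∈ 𝕄.Cls := by
        apply cls_of_Dfn
        repeat' (first
            | exact IsT.var _ _ _ | exact IsT.const (by assumption) | refine IsT.pair ?_ ?_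
            | exact IsT.ren (by assumption) _ (fun _ => rfl)
            | refine Dfn.RR (by assumption) (by assumption) ?_ ?_ ?_
            | refine Dfn.cls (by assumption) ?_ | refine Dfn.mem ?_ ?_ | refine Dfn.eq ?_ ?_
            | refine Dfn.ex ?_ | refine Dfn.all ?_ | refine Dfn.and ?_ ?_)
      obtain ⟨g, hg, -, hgP, d, hdM, hdD, v, hvM, hv, hvd⟩ := hGgen _ hE ⟨fun p hp => hp.2.1, by
        intro p hp
        obtain ⟨d, hd, hdp⟩ := hDd (f p) (hfP p hp)
        obtain ⟨r, hr, hrp, hrd⟩ := hfproj p hp d (hDQ d hd) ((memL _ _).1 hdp).2.2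
        have hfr := hQP' _ (hfP r hr)
        have hdP := hQP' _ (hDQ d hd)
        exact ⟨r, ⟨hPM r hr, hr, d, hPM d hdP, hd, f r, hPM _ hfr, (hf r hr _).1 rfl,
          (memL _ _).2 ⟨hfr, hdP, hrd⟩⟩, hrp⟩⟩
      have hfg := (hf g hgP v).2 hv
      subst hfg
      exact ⟨d, ⟨hDQ d hdD, g, hg, hvd⟩, hdD⟩)
    ht htt
    (fun p hp r hr => hXQ p ((memX p).2 ⟨hp, ((memL _ _).1 hr).2.1⟩))
    x σ hσt hxM
    (by
      rw [← hev]
      refine (nameEval_congr ht htt ?_ σ.rank σ hσt rfl).symm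
      intro p hpt
      constructor
      · intro hpG
        have hpP := hGP hpG
        have hpX := (memX p).2 ⟨hpt, hpP⟩
        refine ⟨hXQ p hpX, p, hpG, ?_⟩
        rw [hfid p hpX]
        exact hrefl p (hXQ p hpX)
      · rintro ⟨hpQ, g, hg, hgp⟩
        have hpP := hQP' p hpQ
        exact hGup g hg p hpP (hfX p ((memX p).2 ⟨hpt, hpP⟩) g (hGP hg) ((memL _ _).1 hgp).2.2))
  obtain ⟨q, hq, hR⟩ := key
  obtain ⟨x', hx', hR'⟩ := hcov q (ZFSet.mem_sep.2 ⟨hq.1, x, hxM, hR⟩)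
  have := RR.unique hQ hL htr hrefl x q σ x' hR hR'
  subst this
  exact hx'

end CF
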